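/- For every β with 0 ≤ β < 1/4 there is a constant C_β < ∞ such that for every z ∈ bD: ∫_{bD} (Re Δ(w,z))^{−(1+β)} dH³(w) ≤ C_β. -/

import Mathlib

open MeasureTheory Complex

noncomputable section

/-- `ℂ²` with the Euclidean metric. -/
abbrev C2 := EuclideanSpace ℂ (Fin 2)

instance : MeasurableSpace C2 := borel _
instance : BorelSpace C2 := ⟨rfl⟩

/-- The defining function `ρ(z) = |z₂|² + (Re z₁)² + (Im z₁)⁴ − 1`. -/
def rho (z : C2) : ℝ := ‖z 1‖ ^ 2 + (z 0).re ^ 2 + (z 0).im ^ 4 - 1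

/-- The boundary `bD = {ρ = 0}`. -/
def bD : Set C2 := {z | rho z = 0}

/-- The Cauchy–Leray denominator
`Δ(w,z) = (u₁ − 2i v₁³)(w₁ − z₁) + conj(w₂)(w₂ − z₂)`. -/
def Delta (w z : C2) : ℂ :=
  (((w 0).re : ℂ) - 2 * I * ((w 0).im : ℂ) ^ 3) * (w 0 - z 0)
    + (starRingEnd ℂ) (w 1) * (w 1 - z 1)
theorem lprod_aux (n : ℕ) (f : Fin n → ℝ → ENNReal) (hf : ∀ j, Measurable (f j)) :
    ∫⁻ x : Fin n → ℝ, ∏ j, f j (x j) = ∏ j, ∫⁻ t, f j t := by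
  induction n with
  | zero => simp [volume_pi]
  | succ n ih =>
    have h := (volume_preserving_piFinSuccAbove (fun _ : Fin (n + 1) => ℝ) 0).symm
    rw [← h.lintegral_comp_emb (MeasurableEquiv.measurableEmbedding _)]
    simp only [Fin.prod_univ_succ]
    rw [← ih (fun j => f j.succ) (fun j => hf _), Measure.volume_eq_prod,
      ← lintegral_prod_mul (hf 0).aemeasurable]
    · rfl
    · exact (Finset.measurable_prod _ fun j _ =>
        (hf _).comp (measurable_pi_apply j)).aemeasurable

/-- one-dimensional kernel -/
def phi (θ : ℝ) (t : ℝ) : ENNReal :=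
  (Set.Icc (-2 : ℝ) 2).indicator (fun t => (ENNReal.ofReal |t|) ^ (-θ)) t

theorem phi_meas (θ : ℝ) : Measurable (phi θ) := by
  unfold phi
  refine Measurable.indicator ?_ measurableSet_Icc
  fun_prop

theorem phi_fin (θ : ℝ) (hθ : θ < 1) : ∫⁻ t, phi θ t < ⊤ := by
  have h1 : ∫⁻ t in Set.Ioc (0:ℝ) 2, ENNReal.ofReal (t ^ (-θ)) < ⊤ := by
    have := (intervalIntegral.intervalIntegrable_rpow' (a := 0) (b := 2) (r := -θ)
      (by linarith)).1
    exact this.lintegral_lt_top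
  set ψ : ℝ → ENNReal := (Set.Ioc (0:ℝ) 2).indicator (fun t => ENNReal.ofReal (t ^ (-θ))) with hψ
  have h2 : ∫⁻ t, ψ t < ⊤ := by
    rwa [hψ, lintegral_indicator measurableSet_Ioc]
  have h3 : ∫⁻ t, ψ (-t) < ⊤ := by
    rwa [lintegral_neg_eq_self ψ]
  have hm : Measurable ψ := by
    refine Measurable.indicator ?_ measurableSet_Ioc
    fun_prop
  calc ∫⁻ t, phi θ t ≤ ∫⁻ t, (ψ t + ψ (-t)) := by
        apply lintegral_mono_ae
        have : ∀ᵐ t : ℝ, t ≠ 0 := by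
          simp [ae_iff]
        filter_upwards [this] with t ht
        unfold phi
        by_cases hI : t ∈ Set.Icc (-2:ℝ) 2
        · rw [Set.indicator_of_mem hI]
          rcases lt_or_gt_of_ne ht with h | h
          · refine le_add_left ?_
            rw [hψ, Set.indicator_of_mem (by constructor <;> linarith [hI.1]), abs_of_neg h,
              ENNReal.ofReal_rpow_of_pos (by linarith)]
          · refine le_add_right ?_
            rw [hψ, Set.indicator_of_mem (by constructor <;> linarith [hI.2]), abs_of_pos h,
              ENNReal.ofReal_rpow_of_pos (by linarith)]
        · rw [Set.indicator_of_notMem hI]; exact bot_le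
    _ = (∫⁻ t, ψ t) + ∫⁻ t, ψ (-t) := lintegral_add_left hm _
    _ < ⊤ := ENNReal.add_lt_top.2 ⟨h2, h3⟩

theorem kern_int (θ : ℝ) (c : Fin 3 → ℝ) :
    ∫⁻ x : Fin 3 → ℝ, ∏ j, phi θ (x j - c j) = (∫⁻ t, phi θ t) ^ 3 := by
  rw [lprod_aux 3 (fun j t => phi θ (t - c j))
    (fun j => (phi_meas θ).comp (measurable_id.sub_const _))]
  simp only [lintegral_sub_right_eq_self (phi θ)]
  simp

theorem haus_aux {P : Set C2} {p : C2 → Fin 3 → ℝ} (hp : Measurable p) (K : NNReal)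
    (h : ∀ a ∈ P, ∀ b ∈ P, dist a b ≤ K * dist (p a) (p b)) :
    Measure.map p ((μH[3] : Measure C2).restrict P) ≤ (K : ENNReal) ^ (3:ℝ) • volume := by
  refine Measure.le_iff.2 fun T hT => ?_
  rw [Measure.map_apply hp hT, Measure.restrict_apply (hp hT)]
  have hinj : Set.InjOn p P := by
    intro a ha b hb hab
    have := h a ha b hb
    rw [hab, dist_self, mul_zero] at this
    exact dist_le_zero.1 this
  set f := Function.invFunOn p P with hf
  have hfp : ∀ a ∈ P, f (p a) = a := fun a ha => hinj.leftInvOn_invFunOn ha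
  have hL : LipschitzOnWith K f (p '' P) := by
    refine LipschitzOnWith.of_dist_le_mul ?_
    rintro _ ⟨a, ha, rfl⟩ _ ⟨b, hb, rfl⟩
    rw [hfp a ha, hfp b hb]
    exact h a ha b hb
  have hsub : p ⁻¹' T ∩ P ⊆ f '' (p '' P ∩ T) := by
    rintro a ⟨haT, ha⟩
    exact ⟨p a, ⟨⟨a, ha, rfl⟩, haT⟩, hfp a ha⟩
  have hv : (μH[3] : Measure (Fin 3 → ℝ)) = volume := by
    have := hausdorffMeasure_pi_real (ι := Fin 3)
    simpa using this
  calc _ ≤ _ := measure_mono hsub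
    _ ≤ _ := (hL.mono Set.inter_subset_left).hausdorffMeasure_image_le (by norm_num)
    _ ≤ (K : ENNReal) ^ (3:ℝ) * volume T := by
      rw [hv]; gcongr; exact Set.inter_subset_right
    _ = _ := by simp

/-- real coordinates -/
def X (w : C2) : Fin 4 → ℝ := ![(w 0).re, (w 0).im, (w 1).re, (w 1).im]

theorem X_meas : Measurable X := by
  refine Continuous.measurable ?_
  unfold X
  refine continuous_pi fun i => ?_
  fin_cases i <;> simp <;> fun_prop

theorem bD_iff (w : C2) : w ∈ bD ↔ X w 2 ^ 2 + X w 3 ^ 2 + X w 0 ^ 2 + X w 1 ^ 4 = 1 := by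
  simp only [bD, rho, Set.mem_ofPred_eq, ← Complex.normSq_eq_norm_sq, Complex.normSq_apply, X]
  simp
  constructor <;> intro h <;> linarith

theorem Delta_re (w z : C2) : (Delta w z).re =
    X w 0 * (X w 0 - X z 0) + 2 * X w 1 ^ 3 * (X w 1 - X z 1)
    + X w 2 * (X w 2 - X z 2) + X w 3 * (X w 3 - X z 3) := by
  have : (((w 0).re : ℂ) - 2 * I * ((w 0).im : ℂ) ^ 3)
      = ⟨(w 0).re, -(2 * (w 0).im ^ 3)⟩ := by
    rw [← Complex.ofReal_pow]
    apply Complex.ext <;>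
      simp only [Complex.sub_re, Complex.sub_im, Complex.mul_re, Complex.mul_im, Complex.ofReal_re,
        Complex.ofReal_im, Complex.I_re, Complex.I_im, Complex.re_ofNat, Complex.im_ofNat] <;> ring
  rw [Delta, this]
  simp only [X, Complex.add_re, Complex.mul_re, Complex.sub_re, Complex.sub_im, Complex.conj_re,
    Complex.conj_im, Matrix.cons_val]
  ring

theorem dist_X (a b : C2) : dist a b ≤
    |X a 0 - X b 0| + |X a 1 - X b 1| + |X a 2 - X b 2| + |X a 3 - X b 3| := by
  rw [EuclideanSpace.dist_eq]
  refine Real.sqrt_le_iff.2 ⟨by positivity, ?_⟩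
  simp only [Fin.sum_univ_two, Complex.dist_eq, ← Complex.normSq_eq_norm_sq, Complex.normSq_apply,
    Complex.sub_re, Complex.sub_im]
  simp only [X, Matrix.cons_val]
  have := abs_nonneg ((a 0).re - (b 0).re)
  have := abs_nonneg ((a 0).im - (b 0).im)
  have := abs_nonneg ((a 1).re - (b 1).re)
  have := abs_nonneg ((a 1).im - (b 1).im)
  rw [← abs_mul_abs_self ((a 0).re - (b 0).re), ← abs_mul_abs_self ((a 0).im - (b 0).im),
    ← abs_mul_abs_self ((a 1).re - (b 1).re), ← abs_mul_abs_self ((a 1).im - (b 1).im)]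
  generalize |(a 0).re - (b 0).re| = p at *
  generalize |(a 0).im - (b 0).im| = q at *
  generalize |(a 1).re - (b 1).re| = r at *
  generalize |(a 1).im - (b 1).im| = s at *
  have : 0 ≤ p * q + p * r + p * s + q * r + q * s + r * s := by positivity
  nlinarith

theorem X_le {w : C2} (h : w ∈ bD) (k : Fin 4) : |X w k| ≤ 1 := by
  rw [bD_iff] at h
  have h1 : 0 ≤ X w 1 ^ 4 := by positivity
  fin_cases k <;> simp only [Fin.zero_eta, Fin.mk_one, Fin.reduceFinMk]
  · exact abs_le_one_iff_mul_self_le_one.2 (by nlinarith [sq_nonneg (X w 2), sq_nonneg (X w 3)])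
  · have : (X w 1 ^ 2) ^ 2 ≤ 1 := by nlinarith [sq_nonneg (X w 2), sq_nonneg (X w 3), sq_nonneg (X w 0)]
    exact abs_le_one_iff_mul_self_le_one.2 (by nlinarith)
  · exact abs_le_one_iff_mul_self_le_one.2 (by nlinarith [sq_nonneg (X w 0), sq_nonneg (X w 3)])
  · exact abs_le_one_iff_mul_self_le_one.2 (by nlinarith [sq_nonneg (X w 2), sq_nonneg (X w 0)])

theorem Delta_lower {w z : C2} (hw : w ∈ bD) (hz : z ∈ bD) :
    (X w 0 - X z 0) ^ 2 + (X w 2 - X z 2) ^ 2 + (X w 3 - X z 3) ^ 2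
      + (X w 1 - X z 1) ^ 4 / 3 ≤ 2 * (Delta w z).re := by
  rw [Delta_re]
  rw [bD_iff] at hw hz
  generalize X w 0 = u at *
  generalize X w 1 = v at *
  generalize X w 2 = s at *
  generalize X w 3 = t at *
  generalize X z 0 = u' at *
  generalize X z 1 = v' at *
  generalize X z 2 = s' at *
  generalize X z 3 = t' at *
  have : 0 ≤ (v - v') ^ 2 * (2 * v + v') ^ 2 := by positivity
  nlinarith

theorem key {w z : C2} (hw : w ∈ bD) (hz : z ∈ bD) (i : Fin 4) :
    (∏ j : Fin 3, |X w (i.succAbove j) - X z (i.succAbove j)|) ^ 4 ≤ (8 * (Delta w z).re) ^ 5 := by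
  have h := Delta_lower hw hz
  have hb : ∀ k, |X w k - X z k| ≤ 2 := fun k =>
    (abs_sub _ _).trans (by linarith [X_le hw k, X_le hz k])
  generalize (Delta w z).re = D at *
  set d : Fin 4 → ℝ := fun k => |X w k - X z k| with hd
  have e0 : (X w 0 - X z 0) ^ 2 = d 0 ^ 2 := (sq_abs _).symm
  have e2 : (X w 2 - X z 2) ^ 2 = d 2 ^ 2 := (sq_abs _).symm
  have e3 : (X w 3 - X z 3) ^ 2 = d 3 ^ 2 := (sq_abs _).symm
  have e1 : (X w 1 - X z 1) ^ 4 = d 1 ^ 4 := by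
    rw [hd]; exact ((show Even 4 by decide).pow_abs _).symm
  rw [e0, e1, e2, e3] at h
  have hn : ∀ k, 0 ≤ d k := fun k => abs_nonneg _
  have hb' : ∀ k, d k ≤ 2 := hb
  change (∏ j : Fin 3, d (i.succAbove j)) ^ 4 ≤ _
  clear_value d
  set N := 8 * D with hN
  have hD : 4 * (d 0 ^ 2 + d 2 ^ 2 + d 3 ^ 2 + d 1 ^ 4 / 3) ≤ N := by linarith
  have p1 : 0 ≤ d 1 ^ 4 := pow_nonneg (hn _) _
  have p0 := sq_nonneg (d 0)
  have p2 := sq_nonneg (d 2)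
  have p3 := sq_nonneg (d 3)
  have hN0 : 0 ≤ N := by linarith
  have q0 : (d 0 ^ 2) ^ 2 ≤ N ^ 2 := pow_le_pow_left₀ p0 (by linarith) 2
  have q2 : (d 2 ^ 2) ^ 2 ≤ N ^ 2 := pow_le_pow_left₀ p2 (by linarith) 2
  have q3 : (d 3 ^ 2) ^ 2 ≤ N ^ 2 := pow_le_pow_left₀ p3 (by linarith) 2
  have r1 : d 1 ^ 4 ≤ N := by linarith
  have r0 : d 0 ^ 4 ≤ N := by
    have : d 0 ^ 2 ≤ 2 ^ 2 := pow_le_pow_left₀ (hn 0) (hb' 0) 2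
    nlinarith
  rw [← pow_mul] at q0 q2 q3
  norm_num at q0 q2 q3
  have fin : ∀ a b c : ℝ, 0 ≤ a → 0 ≤ b → 0 ≤ c → a ^ 4 ≤ N → b ^ 4 ≤ N ^ 2 → c ^ 4 ≤ N ^ 2 →
      (a * b * c) ^ 4 ≤ N ^ 5 := by
    intro a b c ha hb hc h1 h2 h3
    calc (a * b * c) ^ 4 = a ^ 4 * b ^ 4 * c ^ 4 := by ring
      _ ≤ N * N ^ 2 * N ^ 2 := by gcongr
      _ = N ^ 5 := by ring
  rw [Fin.prod_univ_three]
  fin_cases i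
  · exact fin _ _ _ (hn 1) (hn 2) (hn 3) r1 q2 q3
  · exact fin _ _ _ (hn 0) (hn 2) (hn 3) r0 q2 q3
  · have := fin _ _ _ (hn 1) (hn 0) (hn 3) r1 q0 q3
    rw [mul_comm (d 1)] at this
    exact this
  · have := fin _ _ _ (hn 1) (hn 0) (hn 2) r1 q0 q2
    rw [mul_comm (d 1)] at this
    exact this

theorem integrand_le (β : ℝ) (hβ0 : 0 ≤ β) {w z : C2} (hw : w ∈ bD) (hz : z ∈ bD) (i : Fin 4) :
    (ENNReal.ofReal (Delta w z).re) ^ (-(1 + β)) ≤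
      (8 : ENNReal) ^ (1 + β) *
      ∏ j : Fin 3, phi (4 * (1 + β) / 5) (X w (i.succAbove j) - X z (i.succAbove j)) := by
  have hk := key hw hz i
  have hb : ∀ k, |X w k - X z k| ≤ 2 := fun k =>
    (abs_sub _ _).trans (by linarith [X_le hw k, X_le hz k])
  have hphi : ∀ k, phi (4 * (1 + β) / 5) (X w k - X z k) =
      (ENNReal.ofReal |X w k - X z k|) ^ (-(4 * (1 + β) / 5)) := by
    intro k
    unfold phi
    rw [Set.indicator_of_mem]
    exact abs_le.1 (hb k)
  simp only [hphi]
  have hpr : ∏ j : Fin 3, (ENNReal.ofReal |X w (i.succAbove j) - X z (i.succAbove j)|) ^ (-(4 * (1 + β) / 5))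
      = (∏ j : Fin 3, ENNReal.ofReal |X w (i.succAbove j) - X z (i.succAbove j)|) ^ (-(4 * (1 + β) / 5)) :=
    ENNReal.prod_rpow_of_ne_top (fun _ _ => ENNReal.ofReal_ne_top) _
  rw [hpr, ← ENNReal.ofReal_prod_of_nonneg (fun _ _ => abs_nonneg _)]
  have hp0 : 0 ≤ ∏ j : Fin 3, |X w (i.succAbove j) - X z (i.succAbove j)| :=
    Finset.prod_nonneg fun _ _ => abs_nonneg _
  generalize ∏ j : Fin 3, |X w (i.succAbove j) - X z (i.succAbove j)| = m at *
  have hD0 : 0 ≤ (Delta w z).re := by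
    have := Delta_lower hw hz
    have : 0 ≤ (X w 0 - X z 0) ^ 2 + (X w 2 - X z 2) ^ 2 + (X w 3 - X z 3) ^ 2
      + (X w 1 - X z 1) ^ 4 / 3 := by positivity
    linarith
  generalize (Delta w z).re = D at *
  have h1 : (ENNReal.ofReal m) ^ (4:ℕ) ≤ (8 * ENNReal.ofReal D) ^ (5:ℕ) := by
    rw [← ENNReal.ofReal_pow hp0]
    have : (8 : ENNReal) = ENNReal.ofReal 8 := by simp
    rw [this, ← ENNReal.ofReal_mul (by norm_num), ← ENNReal.ofReal_pow (by positivity)]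
    exact ENNReal.ofReal_le_ofReal hk
  have h2 : (ENNReal.ofReal m) ^ (4 * (1 + β) / 5) ≤ (8 : ENNReal) ^ (1 + β) * ENNReal.ofReal D ^ (1 + β) := by
    have := ENNReal.rpow_le_rpow h1 (show 0 ≤ (1 + β) / 5 by positivity)
    rw [← ENNReal.rpow_natCast, ← ENNReal.rpow_natCast, ← ENNReal.rpow_mul, ← ENNReal.rpow_mul] at this
    rw [← ENNReal.mul_rpow_of_nonneg _ _ (by linarith)]
    convert this using 2 <;> push_cast <;> ring
  rw [ENNReal.rpow_neg, ENNReal.rpow_neg]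
  have h8 : (8 : ENNReal) ^ (1 + β) ≠ ⊤ := ENNReal.rpow_ne_top_of_nonneg (by linarith) (by simp)
  have h80 : (8 : ENNReal) ^ (1 + β) ≠ 0 := by simp
  have h3 := ENNReal.inv_le_inv.2 h2
  rw [ENNReal.mul_inv (Or.inl h80) (Or.inl h8)] at h3
  calc _ = (8 : ENNReal) ^ (1 + β) * (((8 : ENNReal) ^ (1 + β))⁻¹ * (ENNReal.ofReal D ^ (1 + β))⁻¹) := by
        rw [← mul_assoc, ENNReal.mul_inv_cancel h80 h8, one_mul]
    _ ≤ _ := by gcongr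

/-- the pieces -/
def piece (i : Fin 4) (ε : ℝ) : Set C2 := {w | w ∈ bD ∧ 1 / 2 ≤ ε * X w i}

theorem bD_closed_meas : MeasurableSet bD := by
  have : bD = {w | X w 2 ^ 2 + X w 3 ^ 2 + X w 0 ^ 2 + X w 1 ^ 4 = 1} := by
    ext w; exact bD_iff w
  rw [this]
  have h : ∀ k, Measurable fun w => X w k := fun k => (measurable_pi_apply k).comp X_meas
  have := h 0; have := h 1; have := h 2; have := h 3
  exact measurableSet_eq_fun (by fun_prop) measurable_const

theorem piece_meas (i : Fin 4) (ε : ℝ) : MeasurableSet (piece i ε) := by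
  have h : Measurable fun w => X w i := (measurable_pi_apply i).comp X_meas
  exact bD_closed_meas.inter (measurableSet_le measurable_const (h.const_mul ε))

/-- signs -/
def sgn (b : Bool) : ℝ := if b then 1 else -1

theorem cover : bD ⊆ ⋃ q : Fin 4 × Bool, piece q.1 (sgn q.2) := by
  intro w hw
  have h := (bD_iff w).1 hw
  have : ∃ k, 1 / 2 ≤ |X w k| := by
    by_contra! hc
    have hs : ∀ k, X w k ^ 2 < (1 / 2) ^ 2 := fun k => by
      rw [← sq_abs]; exact pow_lt_pow_left₀ (hc k) (abs_nonneg _) (by norm_num)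
    nlinarith [hs 0, hs 1, hs 2, hs 3, sq_nonneg (X w 1)]
  obtain ⟨k, hk⟩ := this
  rcases le_abs.1 hk with h | h
  · exact Set.mem_iUnion.2 ⟨(k, true), hw, by simpa [sgn] using h⟩
  · exact Set.mem_iUnion.2 ⟨(k, false), hw, by simpa [sgn] using h⟩

theorem sq_diff {a b D : ℝ} (ha : |a| ≤ 1) (hb : |b| ≤ 1) (h : |a - b| ≤ D) :
    |a ^ 2 - b ^ 2| ≤ 2 * D := by
  have : a ^ 2 - b ^ 2 = (a - b) * (a + b) := by ring
  rw [this, abs_mul]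
  have := abs_add_le a b
  nlinarith [abs_nonneg (a - b), abs_nonneg (a + b)]

theorem four_diff {a b D : ℝ} (ha : |a| ≤ 1) (hb : |b| ≤ 1) (h : |a - b| ≤ D) :
    |a ^ 4 - b ^ 4| ≤ 4 * D := by
  have h1 := sq_diff ha hb h
  have h2 : ∀ x : ℝ, |x| ≤ 1 → |x ^ 2| ≤ 1 := fun x hx => by
    rw [abs_pow]; exact pow_le_one₀ (abs_nonneg _) hx
  have := sq_diff (h2 a ha) (h2 b hb) h1
  rw [← pow_mul, ← pow_mul] at this
  norm_num at this
  linarith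

theorem sq_low {a b ε : ℝ} (hε : ε = 1 ∨ ε = -1) (ha : 1 / 2 ≤ ε * a) (hb : 1 / 2 ≤ ε * b) :
    |a - b| ≤ |a ^ 2 - b ^ 2| := by
  have : a ^ 2 - b ^ 2 = (a - b) * (a + b) := by ring
  rw [this, abs_mul]
  have : 1 ≤ |a + b| := by
    rcases hε with rfl | rfl
    · exact le_abs.2 (Or.inl (by linarith))
    · exact le_abs.2 (Or.inr (by linarith))
  nlinarith [abs_nonneg (a - b)]

theorem four_low {a b ε : ℝ} (hε : ε = 1 ∨ ε = -1) (ha : 1 / 2 ≤ ε * a) (hb : 1 / 2 ≤ ε * b) :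
    |a - b| ≤ 2 * |a ^ 4 - b ^ 4| := by
  have h1 := sq_low hε ha hb
  have : a ^ 4 - b ^ 4 = (a ^ 2 - b ^ 2) * (a ^ 2 + b ^ 2) := by ring
  rw [this, abs_mul]
  have : 1 / 2 ≤ |a ^ 2 + b ^ 2| := by
    refine le_abs.2 (Or.inl ?_)
    rcases hε with rfl | rfl <;> nlinarith
  nlinarith [abs_nonneg (a ^ 2 - b ^ 2)]

/-- projection forgetting the `i`-th coordinate -/
def proj (i : Fin 4) (w : C2) : Fin 3 → ℝ := fun j => X w (i.succAbove j)

theorem proj_meas (i : Fin 4) : Measurable (proj i) :=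
  measurable_pi_lambda _ fun j => (measurable_pi_apply _).comp X_meas

theorem anti (i : Fin 4) (ε : ℝ) (hε : ε = 1 ∨ ε = -1) (a : C2) (ha : a ∈ piece i ε)
    (b : C2) (hb : b ∈ piece i ε) :
    dist a b ≤ (15 : NNReal) * dist (proj i a) (proj i b) := by
  refine (dist_X a b).trans ?_
  have hD : ∀ j, |X a (i.succAbove j) - X b (i.succAbove j)| ≤ dist (proj i a) (proj i b) :=
    fun j => dist_le_pi_dist (proj i a) (proj i b) j
  generalize dist (proj i a) (proj i b) = D at *
  obtain ⟨ha, ha'⟩ := ha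
  obtain ⟨hb, hb'⟩ := hb
  have A := X_le ha
  have B := X_le hb
  rw [bD_iff] at ha hb
  have d0 := hD 0
  have d1 := hD 1
  have d2 := hD 2
  push_cast
  fin_cases i
  · change |X a 1 - X b 1| ≤ D at d0
    change |X a 2 - X b 2| ≤ D at d1
    change |X a 3 - X b 3| ≤ D at d2
    have l := sq_low hε ha' hb'
    simp only [Fin.zero_eta] at l
    have m1 := abs_le.1 (four_diff (A 1) (B 1) d0)
    have m2 := abs_le.1 (sq_diff (A 2) (B 2) d1)
    have m3 := abs_le.1 (sq_diff (A 3) (B 3) d2)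
    have : |X a 0 ^ 2 - X b 0 ^ 2| ≤ 8 * D := abs_le.2 ⟨by linarith, by linarith⟩
    linarith
  · change |X a 0 - X b 0| ≤ D at d0
    change |X a 2 - X b 2| ≤ D at d1
    change |X a 3 - X b 3| ≤ D at d2
    have l := four_low hε ha' hb'
    simp only [Fin.mk_one] at l
    have m1 := abs_le.1 (sq_diff (A 0) (B 0) d0)
    have m2 := abs_le.1 (sq_diff (A 2) (B 2) d1)
    have m3 := abs_le.1 (sq_diff (A 3) (B 3) d2)
    have : |X a 1 ^ 4 - X b 1 ^ 4| ≤ 6 * D := abs_le.2 ⟨by linarith, by linarith⟩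
    linarith
  · change |X a 0 - X b 0| ≤ D at d0
    change |X a 1 - X b 1| ≤ D at d1
    change |X a 3 - X b 3| ≤ D at d2
    have l := sq_low hε ha' hb'
    simp only [Fin.reduceFinMk] at l
    have m1 := abs_le.1 (sq_diff (A 0) (B 0) d0)
    have m2 := abs_le.1 (four_diff (A 1) (B 1) d1)
    have m3 := abs_le.1 (sq_diff (A 3) (B 3) d2)
    have : |X a 2 ^ 2 - X b 2 ^ 2| ≤ 8 * D := abs_le.2 ⟨by linarith, by linarith⟩
    linarith
  · change |X a 0 - X b 0| ≤ D at d0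
    change |X a 1 - X b 1| ≤ D at d1
    change |X a 2 - X b 2| ≤ D at d2
    have l := sq_low hε ha' hb'
    simp only [Fin.reduceFinMk] at l
    have m1 := abs_le.1 (sq_diff (A 0) (B 0) d0)
    have m2 := abs_le.1 (four_diff (A 1) (B 1) d1)
    have m3 := abs_le.1 (sq_diff (A 2) (B 2) d2)
    have : |X a 3 ^ 2 - X b 3 ^ 2| ≤ 8 * D := abs_le.2 ⟨by linarith, by linarith⟩
    linarith

theorem piece_bound (β : ℝ) (hβ0 : 0 ≤ β) (z : C2) (hz : z ∈ bD) (i : Fin 4) (ε : ℝ)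
    (hε : ε = 1 ∨ ε = -1) :
    ∫⁻ w in piece i ε, (ENNReal.ofReal (Delta w z).re) ^ (-(1 + β)) ∂μH[3]
      ≤ (8 : ENNReal) ^ (1 + β) * (((15 : NNReal) : ENNReal) ^ (3:ℝ) *
        (∫⁻ t, phi (4 * (1 + β) / 5) t) ^ 3) := by
  have hm : Measurable fun x : Fin 3 → ℝ =>
      ∏ j, phi (4 * (1 + β) / 5) (x j - proj i z j) :=
    Finset.measurable_prod _ fun j _ =>
      (phi_meas _).comp ((measurable_pi_apply j).sub_const _)
  have h8 : (8 : ENNReal) ^ (1 + β) ≠ ⊤ := ENNReal.rpow_ne_top_of_nonneg (by linarith) (by simp)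
  calc _ ≤ ∫⁻ w in piece i ε, (8 : ENNReal) ^ (1 + β) *
        ∏ j, phi (4 * (1 + β) / 5) (proj i w j - proj i z j) ∂μH[3] :=
        setLIntegral_mono' (piece_meas i ε) fun w hw => integrand_le β hβ0 hw.1 hz i
    _ = (8 : ENNReal) ^ (1 + β) * ∫⁻ w in piece i ε,
        ∏ j, phi (4 * (1 + β) / 5) (proj i w j - proj i z j) ∂μH[3] :=
        lintegral_const_mul' _ _ h8
    _ = (8 : ENNReal) ^ (1 + β) * ∫⁻ x, ∏ j, phi (4 * (1 + β) / 5) (x j - proj i z j)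
        ∂(Measure.map (proj i) ((μH[3] : Measure C2).restrict (piece i ε))) := by
        rw [lintegral_map hm (proj_meas i)]
    _ ≤ (8 : ENNReal) ^ (1 + β) * ∫⁻ x : Fin 3 → ℝ, ∏ j, phi (4 * (1 + β) / 5) (x j - proj i z j)
        ∂(((15 : NNReal) : ENNReal) ^ (3:ℝ) • volume) := by
        gcongr
        exact haus_aux (proj_meas i) 15 (anti i ε hε)
    _ = _ := by
        rw [lintegral_smul_measure, kern_int, smul_eq_mul]

/-- For every `0 ≤ β < 1/4` there is `C_β < ∞` such that for every `z ∈ bD`: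
`∫_{bD} (Re Δ(w,z))^{−(1+β)} dH³(w) ≤ C_β`  (the integrand is `+∞` at `w = z`). -/
theorem stmt6 (β : ℝ) (hβ0 : 0 ≤ β) (hβ : β < 1 / 4) :
    ∃ C : ℝ, ∀ z ∈ bD,
      ∫⁻ w in bD, (ENNReal.ofReal (Delta w z).re) ^ (-(1 + β)) ∂μH[3]
        ≤ ENNReal.ofReal C := by
  set B : ENNReal := (8 : ENNReal) ^ (1 + β) * (((15 : NNReal) : ENNReal) ^ (3:ℝ) *
        (∫⁻ t, phi (4 * (1 + β) / 5) t) ^ 3) with hB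
  have hBt : B ≠ ⊤ := by
    refine ENNReal.mul_ne_top (ENNReal.rpow_ne_top_of_nonneg (by linarith) (by simp))
      (ENNReal.mul_ne_top (ENNReal.rpow_ne_top_of_nonneg (by norm_num) ENNReal.coe_ne_top)
        (ENNReal.pow_ne_top (phi_fin _ (by linarith)).ne))
  refine ⟨(∑ _q : Fin 4 × Bool, B).toReal, fun z hz => ?_⟩
  rw [ENNReal.ofReal_toReal (ENNReal.sum_ne_top.2 fun _ _ => hBt)]
  refine (lintegral_mono_set cover).trans ((lintegral_iUnion_le _ _).trans ?_)
  rw [tsum_fintype]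
  refine Finset.sum_le_sum fun q _ => piece_bound β hβ0 z hz q.1 _ ?_
  unfold sgn
  cases q.2 <;> simp

end
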